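/- arXiv:1303.1152 — 2 statements merged into one kernel-verified Lean document; each statement's English description precedes it below -/
import Mathlib

section
/- (Flipping improves the objective) Let x ∈ ℝⁿ with ‖x‖₁ ≤ 1 have at least one strictly negative entry, and let x' ∈ ℝⁿ be the vector of entrywise absolute values, x'_i := |x_i|. Then x' lies in the filled simplex ▲ (it is non-negative with Σ_i x'_i ≤ 1), and x' is a strictly better solution of the Lasso instance (Ã, b̃): ‖Ãx' − b̃‖₂ < ‖Ãx − b̃‖₂. -/
open Matrix BigOperators

/-- Euclidean norm of a vector over a finite index type. -/
noncomputable def l2 {ι : Type*} [Fintype ι] (v : ι → ℝ) : ℝ := Real.sqrt (∑ k, v k ^ 2)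

/-!
Split `x = x⁺ - x⁻`, so that `|x| = x⁺ + x⁻`, and write `ã j = a j + b`. Then
`Ãx - b = r - s` and `Ã|x| - b = r + s` with `r = Ãx⁺ - b` and `s = Ãx⁻`, so flipping shortens the
residual exactly when `⟪s, r⟫ < 0`. Here `s` is a nonzero nonnegative combination of the `ã j`, and
`r` is a convex combination of the `a i` and `-b`; it remains to see that these points lie in each
open half-space `{v | ⟪ã j, v⟫ < 0}`. For `a i` this holds because `⟪a j, a i⟫ < D ^ 2` and
`⟪b, a i⟫ ≤ -D ^ 2`; for `-b` because `⟪ã j, -b⟫ = ⟪ã j, a j⟫ - ‖ã j‖ ^ 2`.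
-/

theorem one_sub_sum_smul_add_sum_smul_mem {R M ι : Type*} [Field R] [LinearOrder R]
    [IsStrictOrderedRing R] [AddCommGroup M] [Module R M] {s : Set M} {t : Finset ι} {c : ι → R}
    {z : ι → M} {q : M} (hs : Convex R s) (hc : ∀ i ∈ t, 0 ≤ c i) (hsum : ∑ i ∈ t, c i ≤ 1)
    (hq : q ∈ s) (hz : ∀ i ∈ t, z i ∈ s) :
    (1 - ∑ i ∈ t, c i) • q + ∑ i ∈ t, c i • z i ∈ s := by
  let weight (o : Option ι) : R := o.elim (1 - ∑ i ∈ t, c i) c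
  let point (o : Option ι) : M := o.elim q z
  have hmem : ∑ o ∈ Finset.insertNone t, weight o • point o ∈ s :=
    hs.sum_mem (Finset.forall_mem_insertNone.2 ⟨sub_nonneg.2 hsum, hc⟩)
      (by simp [weight]) (Finset.forall_mem_insertNone.2 ⟨hq, hz⟩)
  simpa [weight, point] using hmem

section InnerProductSpace

variable {E : Type*} [NormedAddCommGroup E] [InnerProductSpace ℝ E]

theorem norm_add_lt_norm_sub_of_inner_neg {u v : E} (h : inner ℝ u v < 0) :
    ‖u + v‖ < ‖u - v‖ := by
  refine lt_of_pow_lt_pow_left₀ 2 (norm_nonneg _) ?_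
  rw [norm_add_sq_real, norm_sub_sq_real]
  linarith

theorem inner_add_lt_zero_of_inner_le_neg_sq {u v b : E} {D : ℝ} (hu : ‖u‖ < D) (hv : ‖v‖ < D)
    (hb : inner ℝ v b ≤ -D ^ 2) : inner ℝ (u + b) v < 0 :=
  calc inner ℝ (u + b) v = inner ℝ u v + inner ℝ v b := by
        rw [inner_add_left, real_inner_comm v b]
    _ ≤ ‖u‖ * ‖v‖ + -D ^ 2 := add_le_add (real_inner_le_norm u v) hb
    _ < D * D + -D ^ 2 := by gcongr
    _ = 0 := by ring

theorem inner_add_neg_lt_zero_of_inner_add_lt_zero {u b : E} (h : inner ℝ (u + b) u < 0) :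
    inner ℝ (u + b) (-b) < 0 :=
  calc inner ℝ (u + b) (-b) = inner ℝ (u + b) u - ‖u + b‖ ^ 2 := by
        rw [← real_inner_self_eq_norm_sq, ← inner_sub_right, sub_add_cancel_left]
    _ < 0 := by linarith [sq_nonneg ‖u + b‖]

variable {ι : Type*} [Fintype ι] {a : ι → E} {b : E}

theorem inner_sum_smul_add_sub_lt_zero {c : ι → ℝ} {s : E} (hc : ∀ i, 0 ≤ c i) (hsum : ∑ i, c i ≤ 1)
    (ha : ∀ i, inner ℝ s (a i) < 0) (hb : inner ℝ s (-b) < 0) :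
    inner ℝ s (∑ i, c i • (a i + b) - b) < 0 := by
  have hconvex : Convex ℝ {v : E | inner ℝ s v < 0} :=
    convex_halfSpace_lt (innerₗ E s).isLinear 0
  have hcombination : ∑ i, c i • (a i + b) - b = (1 - ∑ i, c i) • (-b) + ∑ i, c i • a i := by
    simp only [smul_add, Finset.sum_add_distrib, ← Finset.sum_smul]
    module
  rw [hcombination]
  exact one_sub_sum_smul_add_sum_smul_mem hconvex (fun i _ => hc i) hsum hb (fun i _ => ha i)

theorem flipping_improves_general (hab : ∀ i j, inner ℝ (a i + b) (a j) < 0) {x : ι → ℝ}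
    (hx : ∑ i, (x i)⁺ ≤ 1) (hneg : ∃ i, x i < 0) :
    ‖∑ i, |x i| • (a i + b) - b‖ < ‖∑ i, x i • (a i + b) - b‖ := by
  set r : E := ∑ i, (x i)⁺ • (a i + b) - b with hr
  set s : E := ∑ i, (x i)⁻ • (a i + b) with hs
  have hadd : ∑ i, |x i| • (a i + b) - b = r + s := by
    simp only [hr, hs, ← posPart_add_negPart, add_smul, Finset.sum_add_distrib]
    abel
  have hsub : ∑ i, x i • (a i + b) - b = r - s := by
    rw [hr, hs, sub_right_comm, ← Finset.sum_sub_distrib]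
    simp only [← sub_smul, posPart_sub_negPart]
  have hcolumn (j : ι) : inner ℝ (a j + b) r < 0 :=
    inner_sum_smul_add_sub_lt_zero (fun i => posPart_nonneg (x i)) hx (hab j)
      (inner_add_neg_lt_zero_of_inner_add_lt_zero (hab j j))
  have hinner : inner ℝ s r < 0 := by
    obtain ⟨j, hj⟩ := hneg
    simp only [hs, sum_inner, real_inner_smul_left]
    exact Finset.sum_neg'
      (fun i _ => mul_nonpos_of_nonneg_of_nonpos (negPart_nonneg (x i)) (hcolumn i).le)
      ⟨j, Finset.mem_univ j, mul_neg_of_pos_of_neg (negPart_pos hj) (hcolumn j)⟩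
  rw [hadd, hsub]
  exact norm_add_lt_norm_sub_of_inner_neg (real_inner_comm s r ▸ hinner)

end InnerProductSpace

section Coordinates

variable {m ι : Type*} [Fintype m]

theorem l2_eq_norm_toLp (v : m → ℝ) : l2 v = ‖WithLp.toLp 2 v‖ := by
  simp [l2, EuclideanSpace.norm_eq]

theorem l2_mulVec_sub [Fintype ι] (A : Matrix m ι ℝ) (b : m → ℝ) (c : ι → ℝ) :
    l2 ((Matrix.of fun k i => A k i + b k) *ᵥ c - b) =
      ‖∑ i, c i • (WithLp.toLp 2 (Aᵀ i) + WithLp.toLp 2 b) - WithLp.toLp 2 b‖ := by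
  rw [l2_eq_norm_toLp]
  congr 1
  ext k
  simp [Matrix.mulVec, dotProduct, mul_add, mul_comm]

theorem dotProduct_neg_sq_div_mul_le {v w : m → ℝ} {σ r : ℝ} (D : ℝ) (hσ : 0 < σ)
    (h : σ ≤ v ⬝ᵥ w / r) : v ⬝ᵥ (fun k => -(D ^ 2 / σ) * (w k / r)) ≤ -D ^ 2 :=
  calc v ⬝ᵥ (fun k => -(D ^ 2 / σ) * (w k / r)) = -(D ^ 2 / σ * (v ⬝ᵥ w / r)) := by
        simp only [dotProduct, Finset.sum_div, Finset.mul_sum, ← Finset.sum_neg_distrib]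
        exact Finset.sum_congr rfl fun k _ => by ring
    _ ≤ -(D ^ 2 / σ * σ) := by gcongr
    _ = -D ^ 2 := by rw [div_mul_cancel₀ _ hσ.ne']

theorem inner_toLp_add_toLp_lt_zero {u v b : m → ℝ} {D : ℝ} (hu : l2 u < D) (hv : l2 v < D)
    (hb : v ⬝ᵥ b ≤ -D ^ 2) :
    inner ℝ (WithLp.toLp 2 u + WithLp.toLp 2 b) (WithLp.toLp 2 v) < 0 := by
  rw [l2_eq_norm_toLp] at hu hv
  refine inner_add_lt_zero_of_inner_le_neg_sq hu hv ?_
  rwa [EuclideanSpace.inner_toLp_toLp, star_trivial, dotProduct_comm]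

end Coordinates

/-- Flipping improves the objective: if `x` with `‖x‖₁ ≤ 1` has a strictly negative
entry, then the vector `x'` of entrywise absolute values lies in the filled simplex and
is a strictly better solution of the Lasso instance `(Ã, b̃)`, where
`b̃ = −(D²/σ)·w/‖w‖₂` and `Ã = A + b̃·1ᵀ`. -/
theorem flipping_improves {d n : ℕ} (hn : 0 < n) (A : Matrix (Fin d) (Fin n) ℝ)
    (σ D : ℝ) (hσ : 0 < σ) (hD : 0 < D)
    (w : Fin d → ℝ) (hw : w ≠ 0)
    (hsep : ∀ i, (Aᵀ i) ⬝ᵥ w / l2 w ≥ σ)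
    (hAD : ∀ i, l2 (Aᵀ i) < D)
    (x : Fin n → ℝ) (hx : ∑ i, |x i| ≤ 1) (hneg : ∃ i, x i < 0) :
    let bt : Fin d → ℝ := fun k => -(D ^ 2 / σ) * (w k / l2 w)
    let Atil : Matrix (Fin d) (Fin n) ℝ := Matrix.of fun k i => A k i + bt k
    let x' : Fin n → ℝ := fun i => |x i|
    (∀ i, 0 ≤ x' i) ∧ (∑ i, x' i ≤ 1) ∧
      l2 (Atil.mulVec x' - bt) < l2 (Atil.mulVec x - bt) := by
  intro bt Atil x'
  refine ⟨fun i => abs_nonneg (x i), hx, ?_⟩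
  have hpos : ∑ i, (x i)⁺ ≤ 1 :=
    (Finset.sum_le_sum fun i _ => sup_le (le_abs_self (x i)) (abs_nonneg (x i))).trans hx
  rw [l2_mulVec_sub, l2_mulVec_sub]
  exact flipping_improves_general (fun i j => inner_toLp_add_toLp_lt_zero (hAD i) (hAD j)
    (dotProduct_neg_sq_div_mul_le D hσ (hsep j))) hpos hneg
end

section
/- (Duality between the SVM problem and its margin maximization) Suppose there exists a σ₀-weakly-separating vector for A with σ₀ > 0 (i.e. the data is separable). Then min over x in the unit simplex Δ of ‖Ax‖₂ equals sup over x ∈ Δ with Ax ≠ 0 of min_{i∈[1..n]} ⟨A_i, Ax⟩/‖Ax‖₂, and this supremum is attained at any minimizer x* of ‖Ax‖₂ over Δ, for which min_i ⟨A_i, Ax*⟩/‖Ax*‖₂ = ‖Ax*‖₂. -/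
open Matrix BigOperators

/-!
On the convex hull `K` of the data, the functional `⟪·, v⟫ / ‖v‖` is bounded below by the margin of
`v` and, by Cauchy–Schwarz, above by the norm; hence every margin is at most every norm on `K`.
If `v` has minimal norm in `K`, its variational inequality `‖v‖ ^ 2 ≤ ⟪u, v⟫` for `u ∈ K` says that
the margin of `v` is at least `‖v‖`, so the two values meet. Separability keeps `0` out of `K`.
-/

open Set
open scoped RealInnerProductSpace

section InnerProductSpace

variable {ι E : Type*} [NormedAddCommGroup E] [InnerProductSpace ℝ E]

/-- The margin by which the direction of `w` separates the data `a` from the origin: the least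
component of a data point along `w`. It is `0` when `w = 0`, or when these components are not
bounded below. -/
noncomputable def margin (a : ι → E) (w : E) : ℝ := ⨅ i, ⟪a i, w⟫ / ‖w‖

lemma isLinearMap_inner_div_norm (v : E) : IsLinearMap ℝ fun z : E ↦ ⟪z, v⟫ / ‖v‖ where
  map_add x y := by rw [inner_add_left, add_div]
  map_smul c x := by rw [real_inner_smul_left, mul_div_assoc, smul_eq_mul]

lemma inner_div_norm_le_norm (z v : E) : ⟪z, v⟫ / ‖v‖ ≤ ‖z‖ :=
  div_le_of_le_mul₀ (norm_nonneg v) (norm_nonneg z) (real_inner_le_norm z v)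

lemma inner_pos_of_mem_convexHull {s : Set E} {w z : E} (hw : ∀ u ∈ s, 0 < ⟪u, w⟫)
    (hz : z ∈ convexHull ℝ s) : 0 < ⟪z, w⟫ :=
  convexHull_min hw (convex_halfSpace_gt ((innerₗ E).flip w).isLinear 0) hz

lemma norm_sq_le_inner_of_isMinOn {K : Set E} (hK : Convex ℝ K) {u v : E} (hv : v ∈ K)
    (hmin : IsMinOn norm K v) (hu : u ∈ K) : ‖v‖ ^ 2 ≤ ⟪u, v⟫ := by
  have hdist : ‖0 - v‖ = ⨅ w : K, ‖0 - (w : E)‖ := by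
    simpa only [zero_sub, norm_neg] using (hmin.iInf_eq hv).symm
  have hvar := (norm_eq_iInf_iff_real_inner_le_zero hK hv).1 hdist u hu
  rw [zero_sub, inner_neg_left, inner_sub_right, real_inner_self_eq_norm_sq,
    real_inner_comm] at hvar
  linarith

variable {a : ι → E} {v z : E}

lemma bddBelow_range_inner_div_norm (hK : IsCompact (convexHull ℝ (range a))) (v : E) :
    BddBelow (range fun i ↦ ⟪a i, v⟫ / ‖v‖) := by
  have himage : BddBelow ((fun z ↦ ⟪z, v⟫ / ‖v‖) '' convexHull ℝ (range a)) :=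
    hK.bddBelow_image (by fun_prop)
  refine himage.mono (range_subset_iff.2 fun i ↦ mem_image_of_mem _ ?_)
  exact subset_convexHull ℝ _ (mem_range_self i)

lemma margin_le_inner_div_norm (hbdd : BddBelow (range fun i ↦ ⟪a i, v⟫ / ‖v‖))
    (hz : z ∈ convexHull ℝ (range a)) : margin a v ≤ ⟪z, v⟫ / ‖v‖ :=
  have hrange : range a ⊆ {u | margin a v ≤ ⟪u, v⟫ / ‖v‖} := range_subset_iff.2 (ciInf_le hbdd)
  convexHull_min hrange (convex_halfSpace_ge (isLinearMap_inner_div_norm v) (margin a v)) hz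

lemma margin_le_norm (hbdd : BddBelow (range fun i ↦ ⟪a i, v⟫ / ‖v‖))
    (hz : z ∈ convexHull ℝ (range a)) : margin a v ≤ ‖z‖ :=
  (margin_le_inner_div_norm hbdd hz).trans (inner_div_norm_le_norm z v)

lemma norm_le_margin_of_isMinOn [Nonempty ι] (hv : v ∈ convexHull ℝ (range a)) (hv0 : v ≠ 0)
    (hmin : IsMinOn norm (convexHull ℝ (range a)) v) : ‖v‖ ≤ margin a v := by
  refine le_ciInf fun i ↦ (le_div_iff₀ (norm_pos_iff.2 hv0)).2 ?_
  rw [← sq]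
  exact norm_sq_le_inner_of_isMinOn (convex_convexHull ℝ _) hv hmin
    (subset_convexHull ℝ _ (mem_range_self i))

theorem svm_margin_duality_general [Nonempty ι] (a : ι → E)
    (hK : IsCompact (convexHull ℝ (range a))) (hsep : ∃ w, ∀ i, 0 < ⟪a i, w⟫) :
    sInf (norm '' convexHull ℝ (range a)) = sSup (margin a '' (convexHull ℝ (range a) \ {0})) ∧
      ∀ v ∈ convexHull ℝ (range a), IsMinOn norm (convexHull ℝ (range a)) v →
        margin a v = ‖v‖ := by
  have hne : ∀ v ∈ convexHull ℝ (range a), v ≠ 0 := by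
    obtain ⟨w, hw⟩ := hsep
    rintro _ hv rfl
    exact (inner_pos_of_mem_convexHull (forall_mem_range.2 hw) hv).ne' (inner_zero_left w)
  have hweak : ∀ v, ∀ z ∈ convexHull ℝ (range a), margin a v ≤ ‖z‖ := fun v z ↦
    margin_le_norm (bddBelow_range_inner_div_norm hK v)
  have hstrong : ∀ v ∈ convexHull ℝ (range a), IsMinOn norm (convexHull ℝ (range a)) v →
      margin a v = ‖v‖ := fun v hv hmin ↦
    (hweak v v hv).antisymm (norm_le_margin_of_isMinOn hv (hne v hv) hmin)
  obtain ⟨v, hv, hmin⟩ :=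
    hK.exists_isMinOn (range_nonempty a).convexHull continuous_norm.continuousOn
  have hleast : IsLeast (norm '' convexHull ℝ (range a)) ‖v‖ :=
    ⟨mem_image_of_mem _ hv, forall_mem_image.2 hmin⟩
  have hgreatest : IsGreatest (margin a '' (convexHull ℝ (range a) \ {0})) ‖v‖ :=
    ⟨⟨v, ⟨hv, hne v hv⟩, hstrong v hv hmin⟩, forall_mem_image.2 fun u _ ↦ hweak u v hv⟩
  exact ⟨hleast.csInf_eq.trans hgreatest.csSup_eq.symm, hstrong⟩

end InnerProductSpace

section Matrix

variable {m n : Type*}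

/-- The columns of a real matrix as points of Euclidean space, which carries the `ℓ²` norm rather
than the sup norm of `m → ℝ`. -/
def euclideanCol (A : Matrix m n ℝ) (i : n) : EuclideanSpace ℝ m := WithLp.toLp 2 (Aᵀ i)

lemma l2_eq_norm [Fintype m] (v : m → ℝ) : l2 v = ‖WithLp.toLp 2 v‖ := by
  simp only [l2, EuclideanSpace.norm_eq, Real.norm_eq_abs, sq_abs]

lemma inner_euclideanCol [Fintype m] (A : Matrix m n ℝ) (i : n) (v : m → ℝ) :
    ⟪euclideanCol A i, WithLp.toLp 2 v⟫ = Aᵀ i ⬝ᵥ v := by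
  rw [euclideanCol, EuclideanSpace.inner_toLp_toLp, star_trivial, dotProduct_comm]

lemma inner_euclideanCol_pos [Fintype m] {A : Matrix m n ℝ} {w : m → ℝ} {i : n}
    (h : 0 < Aᵀ i ⬝ᵥ w / l2 w) : 0 < ⟪euclideanCol A i, WithLp.toLp 2 w⟫ := by
  rw [inner_euclideanCol]
  exact pos_of_mul_pos_left h (inv_nonneg.2 (Real.sqrt_nonneg _))

lemma margin_euclideanCol [Fintype m] (A : Matrix m n ℝ) (v : m → ℝ) :
    margin (euclideanCol A) (WithLp.toLp 2 v) = ⨅ i, Aᵀ i ⬝ᵥ v / l2 v := by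
  simp only [margin, inner_euclideanCol, l2_eq_norm]

lemma convexHull_range_euclideanCol [Fintype n] (A : Matrix m n ℝ) :
    convexHull ℝ (range (euclideanCol A)) =
      (fun x ↦ WithLp.toLp 2 (A *ᵥ x)) '' stdSimplex ℝ n := by
  classical
  let L : (n → ℝ) →ₗ[ℝ] EuclideanSpace ℝ m := (WithLp.linearEquiv 2 ℝ (m → ℝ)).symm ∘ₗ A.mulVecLin
  have hcol : euclideanCol A = L ∘ fun i ↦ Pi.single i 1 := by
    funext i
    simp [L, euclideanCol, Matrix.col]
  rw [hcol, range_comp, ← L.image_convexHull, convexHull_rangle_single_eq_stdSimplex]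
  rfl

variable [Fintype n]

lemma toLp_mulVec_mem_convexHull (A : Matrix m n ℝ) {x : n → ℝ} (hnonneg : ∀ i, 0 ≤ x i)
    (hsum : ∑ i, x i = 1) : WithLp.toLp 2 (A *ᵥ x) ∈ convexHull ℝ (range (euclideanCol A)) :=
  convexHull_range_euclideanCol A ▸ mem_image_of_mem _ ⟨hnonneg, hsum⟩

variable [Fintype m]

lemma norm_image_convexHull_range_euclideanCol (A : Matrix m n ℝ) :
    norm '' convexHull ℝ (range (euclideanCol A)) =
      {r | ∃ x : n → ℝ, (∀ i, 0 ≤ x i) ∧ ∑ i, x i = 1 ∧ r = l2 (A *ᵥ x)} := by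
  ext r
  simp only [convexHull_range_euclideanCol, image_image, ← l2_eq_norm, mem_image, stdSimplex,
    mem_ofPred_eq, and_assoc, eq_comm (a := r)]

lemma margin_image_convexHull_range_euclideanCol (A : Matrix m n ℝ) :
    margin (euclideanCol A) '' (convexHull ℝ (range (euclideanCol A)) \ {0}) =
      {r | ∃ x : n → ℝ, (∀ i, 0 ≤ x i) ∧ ∑ i, x i = 1 ∧ A *ᵥ x ≠ 0 ∧
        r = ⨅ i, Aᵀ i ⬝ᵥ A *ᵥ x / l2 (A *ᵥ x)} := by
  ext r
  constructor
  · rw [convexHull_range_euclideanCol]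
    rintro ⟨_, ⟨⟨x, hx, rfl⟩, hne⟩, rfl⟩
    exact ⟨x, hx.1, hx.2, mt (WithLp.toLp_eq_zero 2).2 hne, margin_euclideanCol A _⟩
  · rintro ⟨x, hnonneg, hsum, hne, rfl⟩
    exact ⟨WithLp.toLp 2 (A *ᵥ x), ⟨toLp_mulVec_mem_convexHull A hnonneg hsum,
      mt (WithLp.toLp_eq_zero 2).1 hne⟩, margin_euclideanCol A _⟩

lemma isMinOn_norm_convexHull_range_euclideanCol_iff {A : Matrix m n ℝ} {y : m → ℝ} :
    IsMinOn norm (convexHull ℝ (range (euclideanCol A))) (WithLp.toLp 2 y) ↔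
      ∀ x : n → ℝ, (∀ i, 0 ≤ x i) → ∑ i, x i = 1 → l2 y ≤ l2 (A *ᵥ x) := by
  simp only [isMinOn_iff, convexHull_range_euclideanCol, forall_mem_image, ← l2_eq_norm,
    stdSimplex, mem_ofPred_eq, and_imp]

end Matrix

/-- Duality between the SVM problem and its margin maximization: if the data is
separable (there is a σ₀-weakly-separating vector with σ₀ > 0), then
`min_{x ∈ Δ} ‖Ax‖₂ = sup_{x ∈ Δ, Ax ≠ 0} min_i ⟨Aᵢ, Ax⟩/‖Ax‖₂`, and this supremum is
attained at any minimizer `x*` of `‖Ax‖₂` over `Δ`, for which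
`min_i ⟨Aᵢ, Ax*⟩/‖Ax*‖₂ = ‖Ax*‖₂`. -/
theorem svm_margin_duality {d n : ℕ} (hn : 0 < n) (A : Matrix (Fin d) (Fin n) ℝ)
    (hsep : ∃ w : Fin d → ℝ, w ≠ 0 ∧ ∃ σ0 > (0 : ℝ), ∀ i, (Aᵀ i) ⬝ᵥ w / l2 w ≥ σ0) :
    sInf {v : ℝ | ∃ x : Fin n → ℝ, (∀ i, 0 ≤ x i) ∧ (∑ i, x i = 1) ∧
        v = l2 (A.mulVec x)} =
    sSup {v : ℝ | ∃ x : Fin n → ℝ, (∀ i, 0 ≤ x i) ∧ (∑ i, x i = 1) ∧ A.mulVec x ≠ 0 ∧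
        v = ⨅ i : Fin n, (Aᵀ i) ⬝ᵥ A.mulVec x / l2 (A.mulVec x)} ∧
    ∀ xs : Fin n → ℝ, (∀ i, 0 ≤ xs i) → (∑ i, xs i = 1) →
      (∀ x : Fin n → ℝ, (∀ i, 0 ≤ x i) → (∑ i, x i = 1) →
        l2 (A.mulVec xs) ≤ l2 (A.mulVec x)) →
      (⨅ i : Fin n, (Aᵀ i) ⬝ᵥ A.mulVec xs / l2 (A.mulVec xs)) = l2 (A.mulVec xs) := by
  have : Nonempty (Fin n) := ⟨⟨0, hn⟩⟩
  obtain ⟨w, -, σ, hσ, hw⟩ := hsep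
  obtain ⟨hdual, hattained⟩ := svm_margin_duality_general (euclideanCol A)
    ((finite_range _).isCompact_convexHull ℝ)
    ⟨_, fun i ↦ inner_euclideanCol_pos (hσ.trans_le (hw i))⟩
  rw [norm_image_convexHull_range_euclideanCol,
    margin_image_convexHull_range_euclideanCol] at hdual
  refine ⟨hdual, fun xs hnonneg hsum hmin ↦ ?_⟩
  rw [← margin_euclideanCol, l2_eq_norm]
  exact hattained _ (toLp_mulVec_mem_convexHull A hnonneg hsum)
    (isMinOn_norm_convexHull_range_euclideanCol_iff.2 hmin)
end
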